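/- Let n ≥ 3, μ ∈ ℝ, σ > 0 and ξ ∈ ℝ (possibly 0). Let (r_{IJ}) be any family of real weights indexed by pairs (I,J) with 1 ≤ I and I + 2 ≤ J ≤ n, satisfying ∑_{I,J} r_{IJ} = 1. Then the function g ↦ ∑_{I,J} r_{IJ} · ξ̂_{IJ}(u_ξ(g_1), …, u_ξ(g_n)) is Lebesgue integrable on Δ_n and n! · ∫_{Δ_n} ∑_{I,J} r_{IJ} · ξ̂_{IJ}(u_ξ(g_1), …, u_ξ(g_n)) dg = ξ. That is, every unit-sum linear combination of elemental estimators is an unbiased estimator of the GPD tail parameter. -/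

import Mathlib

open MeasureTheory Real Set

/-- The GPD tail-quantile function: `u_ξ(t) = μ + (σ/ξ)(t^{-ξ} - 1)` for `ξ ≠ 0`,
and `u_0(t) = μ - σ log t`. -/
noncomputable def gpdQ (μ σ ξ : ℝ) (t : ℝ) : ℝ :=
  if ξ = 0 then μ - σ * Real.log t else μ + σ / ξ * (t ^ (-ξ) - 1)

/-- The open simplex `Δ_n = {g : 0 < g 1 < ⋯ < g n < 1}` in `ℝ^n`. -/
def simplex (n : ℕ) : Set (Fin n → ℝ) :=
  {g | StrictMono g ∧ ∀ i, 0 < g i ∧ g i < 1}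

/-- The data tuple `X_i = u(g_i)` (1-based indexing: `sample n u g i = u (g_{i-1})`,
for `1 ≤ i ≤ n`; junk value `0` outside this range). -/
noncomputable def sample (n : ℕ) (u : ℝ → ℝ) (g : Fin n → ℝ) : ℕ → ℝ :=
  fun i => if h : i - 1 < n then u (g ⟨i - 1, h⟩) else 0

/-- The elemental estimator
`ξ̂_{IJ}(x) = (J−1)·log(x_I − x_{J−1}) − (J−1−I)·log(x_I − x_J) − I·log(x_{I+1} − x_J)`. -/
noncomputable def elemental (I J : ℕ) (x : ℕ → ℝ) : ℝ :=
  ((J : ℝ) - 1) * Real.log (x I - x (J - 1))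
    - ((J : ℝ) - 1 - (I : ℝ)) * Real.log (x I - x J)
    - (I : ℝ) * Real.log (x (I + 1) - x J)

/-! The ratio `g_i / g_{i+d}` of two uniform order statistics has law `Beta(i, d)`. Indeed,
given its last coordinate `x`, which has law `Beta(n + 1, 1)`, a uniform point of `Δ_{n+1}` is `x`
times a uniform point of `Δ_n`; and the product of independent `Beta(a + b, 1)` and `Beta(a, b)`
variables has law `Beta(a, b + 1)`.

Since `u(s) - u(t) = t ^ (-ξ) (u(s / t) - u(1))`, the variables in an elemental estimator enter only
through such ratios: with `φ(v) = log (u(v) - u(1))`, `a = I` and `b = J - 1 - I` it equals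
`(a + b) φ(g_I / g_{J-1}) - b φ(g_I / g_J) - a φ(g_{I+1} / g_J) - ξ (a + b) log (g_{J-1} / g_J)`.
The three `φ` terms cancel in expectation because `(a + b) Beta(a, b) = b Beta(a, b + 1) +
a Beta(a + 1, b)`, and the last one contributes `ξ` because `log` has mean `-1 / (a + b)` under
`Beta(a + b, 1)`. -/

section Beta

open ProbabilityTheory

variable {a b : ℝ}

lemma beta_one_right (ha : 0 < a) : beta a 1 = 1 / a := by
  have := Real.Gamma_pos_of_pos ha
  rw [beta, Real.Gamma_one, Real.Gamma_add_one ha.ne']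
  field_simp

lemma beta_add_one_right (ha : 0 < a) (hb : 0 < b) : beta a (b + 1) = b / (a + b) * beta a b := by
  have := Real.Gamma_pos_of_pos (add_pos ha hb)
  rw [beta, beta, ← add_assoc, Real.Gamma_add_one hb.ne', Real.Gamma_add_one (add_pos ha hb).ne']
  field_simp

lemma beta_comm (a b : ℝ) : beta a b = beta b a := by
  rw [beta, beta, add_comm a b, mul_comm (Real.Gamma a)]

lemma beta_add_one_left (ha : 0 < a) (hb : 0 < b) : beta (a + 1) b = a / (a + b) * beta a b := by
  rw [beta_comm, beta_add_one_right hb ha, beta_comm b, add_comm b]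

lemma betaPDFReal_of_mem {x : ℝ} (hx : x ∈ Ioo (0 : ℝ) 1) :
    betaPDFReal a b x = 1 / beta a b * x ^ (a - 1) * (1 - x) ^ (b - 1) :=
  if_pos hx

lemma betaPDFReal_of_notMem {x : ℝ} (hx : x ∉ Ioo (0 : ℝ) 1) : betaPDFReal a b x = 0 :=
  if_neg hx

lemma betaPDF_of_notMem {x : ℝ} (hx : x ∉ Ioo (0 : ℝ) 1) : betaPDF a b x = 0 := by
  rw [betaPDF, betaPDFReal_of_notMem hx, ENNReal.ofReal_zero]

lemma betaPDFReal_nonneg (ha : 0 < a) (hb : 0 < b) (x : ℝ) : 0 ≤ betaPDFReal a b x := by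
  by_cases hx : x ∈ Ioo (0 : ℝ) 1
  · exact (betaPDFReal_pos hx.1 hx.2 ha hb).le
  · rw [betaPDFReal_of_notMem hx]

lemma betaPDFReal_one_right (ha : 0 < a) {x : ℝ} (hx : x ∈ Ioo (0 : ℝ) 1) :
    betaPDFReal a 1 x = a * x ^ (a - 1) := by
  rw [betaPDFReal_of_mem hx, beta_one_right ha, sub_self, Real.rpow_zero, mul_one, one_div_one_div]

lemma betaPDFReal_one_sub (a b x : ℝ) : betaPDFReal a b (1 - x) = betaPDFReal b a x := by
  simp only [betaPDFReal, beta_comm a b, sub_pos, sub_lt_self_iff, sub_sub_cancel]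
  grind

lemma add_mul_betaPDFReal (ha : 0 < a) (hb : 0 < b) (x : ℝ) :
    (a + b) * betaPDFReal a b x =
      b * betaPDFReal a (b + 1) x + a * betaPDFReal (a + 1) b x := by
  by_cases hx : x ∈ Ioo (0 : ℝ) 1
  · have hβ := beta_pos ha hb
    simp only [betaPDFReal_of_mem hx, beta_add_one_right ha hb, beta_add_one_left ha hb,
      add_sub_cancel_right, Real.rpow_sub_one hx.1.ne', Real.rpow_sub_one (sub_pos.2 hx.2).ne']
    have := sub_pos.2 hx.2
    have := hx.1
    field_simp
    ring
  · simp only [betaPDFReal_of_notMem hx, mul_zero, add_zero]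

@[fun_prop]
lemma measurable_betaPDF (a b : ℝ) : Measurable (betaPDF a b) :=
  (measurable_betaPDFReal a b).ennreal_ofReal

lemma ae_betaMeasure_mem_Ioo (a b : ℝ) : ∀ᵐ x ∂betaMeasure a b, x ∈ Ioo (0 : ℝ) 1 := by
  rw [betaMeasure, ae_withDensity_iff (measurable_betaPDF a b)]
  refine .of_forall fun x hx => ?_
  contrapose! hx
  exact betaPDF_of_notMem hx

lemma integrable_betaMeasure_iff (ha : 0 < a) (hb : 0 < b) {φ : ℝ → ℝ} :
    Integrable φ (betaMeasure a b) ↔ Integrable fun x => betaPDFReal a b x * φ x := by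
  rw [betaMeasure, integrable_withDensity_iff_integrable_smul' (measurable_betaPDF a b)
    (.of_forall fun _ => ENNReal.ofReal_lt_top)]
  simp only [betaPDF, ENNReal.toReal_ofReal (betaPDFReal_nonneg ha hb _), smul_eq_mul]

lemma integral_betaMeasure (ha : 0 < a) (hb : 0 < b) (φ : ℝ → ℝ) :
    ∫ x, φ x ∂betaMeasure a b = ∫ x, betaPDFReal a b x * φ x := by
  rw [betaMeasure, integral_withDensity_eq_integral_toReal_smul (measurable_betaPDF a b)
    (.of_forall fun _ => ENNReal.ofReal_lt_top)]
  simp only [betaPDF, ENNReal.toReal_ofReal (betaPDFReal_nonneg ha hb _), smul_eq_mul]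

lemma add_mul_integral_betaMeasure (ha : 0 < a) (hb : 0 < b) {φ : ℝ → ℝ}
    (hr : Integrable φ (betaMeasure a (b + 1))) (hl : Integrable φ (betaMeasure (a + 1) b)) :
    (a + b) * ∫ x, φ x ∂betaMeasure a b =
      b * ∫ x, φ x ∂betaMeasure a (b + 1) + a * ∫ x, φ x ∂betaMeasure (a + 1) b := by
  have ha' : 0 < a + 1 := by positivity
  have hb' : 0 < b + 1 := by positivity
  rw [integrable_betaMeasure_iff ha hb'] at hr
  rw [integrable_betaMeasure_iff ha' hb] at hl
  simp only [integral_betaMeasure, ha, hb, ha', hb', ← integral_const_mul]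
  rw [← integral_add (hr.const_mul b) (hl.const_mul a)]
  refine integral_congr_ae (.of_forall fun x => ?_)
  linear_combination φ x * add_mul_betaPDFReal ha hb x

lemma integrable_betaPDFReal (ha : 0 < a) (hb : 0 < b) : Integrable (betaPDFReal a b) := by
  have := isProbabilityMeasureBeta ha hb
  simpa using (integrable_betaMeasure_iff ha hb).1 (integrable_const (1 : ℝ))

lemma integrable_log_betaMeasure (ha : 0 < a) (hb : 0 < b) :
    Integrable Real.log (betaMeasure a b) := by
  rw [integrable_betaMeasure_iff ha hb]
  refine ((integrable_betaPDFReal (half_pos ha) hb).const_mul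
    (beta (a / 2) b / beta a b * (1 / (a / 2)))).mono' (by fun_prop) (.of_forall fun x => ?_)
  by_cases hx : x ∈ Ioo (0 : ℝ) 1
  · have hβ := beta_pos ha hb
    have hβ' := beta_pos (half_pos ha) hb
    have hx' := sub_pos.2 hx.2
    -- Half of the factor `x ^ a` absorbs the logarithm; the other half leaves a beta density.
    have hlog := (Real.abs_log_mul_self_rpow_lt x (a / 2) hx.1 hx.2.le (half_pos ha)).le
    have hrpow : x ^ (a - 1) = x ^ (a / 2 - 1) * x ^ (a / 2) := by
      rw [← Real.rpow_add hx.1]; ring_nf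
    have hx0 := hx.1
    calc ‖betaPDFReal a b x * Real.log x‖
        = 1 / beta a b * x ^ (a / 2 - 1) * (1 - x) ^ (b - 1) * |Real.log x * x ^ (a / 2)| := by
          rw [norm_mul, Real.norm_of_nonneg (betaPDFReal_nonneg ha hb x), Real.norm_eq_abs,
            abs_mul, abs_of_pos (Real.rpow_pos_of_pos hx0 _), betaPDFReal_of_mem hx, hrpow]
          ring
      _ ≤ 1 / beta a b * x ^ (a / 2 - 1) * (1 - x) ^ (b - 1) * (1 / (a / 2)) := by gcongr
      _ = beta (a / 2) b / beta a b * (1 / (a / 2)) * betaPDFReal (a / 2) b x := by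
          rw [betaPDFReal_of_mem hx]
          field_simp
  · simp only [betaPDFReal_of_notMem hx, zero_mul, mul_zero, norm_zero, le_refl]

lemma integrable_log_one_sub_betaMeasure (ha : 0 < a) (hb : 0 < b) :
    Integrable (fun x => Real.log (1 - x)) (betaMeasure a b) := by
  have h := (integrable_betaMeasure_iff hb ha).1 (integrable_log_betaMeasure hb ha)
  simpa only [integrable_betaMeasure_iff ha hb, betaPDFReal_one_sub] using h.comp_sub_left 1

lemma integral_log_betaMeasure_one_right (ha : 0 < a) :
    ∫ x, Real.log x ∂betaMeasure a 1 = -(1 / a) := by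
  have hint := (integrable_betaMeasure_iff ha one_pos).1 (integrable_log_betaMeasure ha one_pos)
  have hsupp : ∀ x ∉ Ioo (0 : ℝ) 1, betaPDFReal a 1 x * Real.log x = 0 := fun x hx => by
    rw [betaPDFReal_of_notMem hx, zero_mul]
  have hderiv : ∀ x ∈ Ioo (0 : ℝ) 1, HasDerivAt (fun y => Real.log y * y ^ a - y ^ a / a)
      (betaPDFReal a 1 x * Real.log x) x := fun x hx => by
    have hpow := Real.hasDerivAt_rpow_const (p := a) (Or.inl hx.1.ne')
    refine (((Real.hasDerivAt_log hx.1.ne').mul hpow).sub (hpow.div_const a)).congr_deriv ?_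
    rw [betaPDFReal_one_right ha hx, Real.rpow_sub_one hx.1.ne']
    have := hx.1
    field_simp
    ring
  have hpow_cont : Continuous fun y : ℝ => y ^ a := Real.continuous_rpow_const ha.le
  have hzero := (tendsto_log_mul_rpow_nhdsGT_zero ha).sub
    (((hpow_cont.tendsto 0).mono_left nhdsWithin_le_nhds).div_const a)
  have hone := ((Real.continuousAt_log one_ne_zero).mul hpow_cont.continuousAt).sub
    (hpow_cont.continuousAt.div_const a)
  rw [integral_betaMeasure ha one_pos, ← setIntegral_eq_integral_of_forall_compl_eq_zero hsupp,
    ← integral_Ioc_eq_integral_Ioo, ← intervalIntegral.integral_of_le zero_le_one,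
    intervalIntegral.integral_eq_sub_of_hasDerivAt_of_tendsto zero_lt_one hderiv
      hint.intervalIntegrable hzero (hone.tendsto.mono_left nhdsWithin_le_nhds)]
  simp [ha.ne']

end Beta

section Product

open ProbabilityTheory Module
open scoped ENNReal

lemma lintegral_comp_smul {E : Type*} [NormedAddCommGroup E] [NormedSpace ℝ E]
    [MeasurableSpace E] [BorelSpace E] [FiniteDimensional ℝ E] (μ : Measure E) [μ.IsAddHaarMeasure]
    (f : E → ℝ≥0∞) {r : ℝ} (hr : r ≠ 0) :
    ∫⁻ x, f (r • x) ∂μ = ENNReal.ofReal |(r ^ finrank ℝ E)⁻¹| * ∫⁻ x, f x ∂μ := by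
  rw [← smul_eq_mul, ← lintegral_smul_measure, ← Measure.map_addHaar_smul μ hr]
  exact ((Homeomorph.smulOfNeZero r hr).measurableEmbedding.lintegral_map f).symm

variable {a b : ℝ}

lemma lintegral_betaMeasure (f : ℝ → ℝ≥0∞) (a b : ℝ) :
    ∫⁻ x, f x ∂betaMeasure a b = ∫⁻ x, betaPDF a b x * f x := by
  rw [betaMeasure, lintegral_withDensity_eq_lintegral_mul_non_measurable _
    (measurable_betaPDF a b) (.of_forall fun _ => ENNReal.ofReal_lt_top)]
  rfl

lemma lintegral_rpow_sub_Ioo (hb : 0 < b) {s t : ℝ} (hst : s ≤ t) :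
    ∫⁻ x in Ioo s t, ENNReal.ofReal ((x - s) ^ (b - 1)) = ENNReal.ofReal ((t - s) ^ b / b) := by
  have hint : IntervalIntegrable (fun x => (x - s) ^ (b - 1)) volume s t := by
    simpa using (intervalIntegral.intervalIntegrable_rpow' (a := 0) (b := t - s)
      (by linarith : -1 < b - 1)).comp_sub_right s
  rw [← ofReal_integral_eq_lintegral_ofReal
    ((intervalIntegrable_iff_integrableOn_Ioo_of_le hst).1 hint)
    (ae_restrict_of_forall_mem measurableSet_Ioo fun x hx =>
      Real.rpow_nonneg (sub_nonneg.2 hx.1.le) _),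
    ← integral_Ioc_eq_integral_Ioo, ← intervalIntegral.integral_of_le hst,
    intervalIntegral.integral_comp_sub_right (fun x => x ^ (b - 1)),
    integral_rpow (Or.inl (by linarith))]
  simp [hb.ne']

lemma betaPDF_mul_betaPDF_div (ha : 0 < a) (hb : 0 < b) {s w : ℝ} (hs : 0 < s) :
    betaPDF (a + b) 1 w * (ENNReal.ofReal |w⁻¹| * betaPDF a b (s / w)) =
      (Ioo s 1).indicator (fun w => ENNReal.ofReal ((a + b) / beta a b * s ^ (a - 1)) *
        ENNReal.ofReal ((w - s) ^ (b - 1))) w := by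
  have hβ := beta_pos ha hb
  by_cases hw : w ∈ Ioo s 1
  · have hw0 : 0 < w := hs.trans hw.1
    have hws : 0 < w - s := sub_pos.2 hw.1
    have hdiv : s / w ∈ Ioo (0 : ℝ) 1 := ⟨by positivity, (div_lt_one hw0).2 hw.1⟩
    rw [indicator_of_mem hw, betaPDF, betaPDF, betaPDFReal_one_right (by positivity) ⟨hw0, hw.2⟩,
      betaPDFReal_of_mem hdiv, ← ENNReal.ofReal_mul (by positivity),
      ← ENNReal.ofReal_mul (by positivity), ← ENNReal.ofReal_mul (by positivity),
      one_sub_div hw0.ne', Real.div_rpow hs.le hw0.le, Real.div_rpow hws.le hw0.le,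
      abs_of_pos (inv_pos.2 hw0)]
    have hpow : w ^ (a + b - 1) = w ^ (a - 1) * w ^ (b - 1) * w := by
      rw [← Real.rpow_add hw0, ← Real.rpow_add_one hw0.ne']; ring_nf
    rw [hpow]
    congr 1
    field_simp
  · rw [indicator_of_notMem hw]
    by_cases hw1 : w ∈ Ioo (0 : ℝ) 1
    · have hdiv : s / w ∉ Ioo (0 : ℝ) 1 := fun h => hw ⟨(div_lt_one hw1.1).1 h.2, hw1.2⟩
      rw [betaPDF_of_notMem hdiv, mul_zero, mul_zero]
    · rw [betaPDF_of_notMem hw1, zero_mul]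

lemma lintegral_betaPDF_mul_betaPDF_div (ha : 0 < a) (hb : 0 < b) (s : ℝ) :
    ∫⁻ w, betaPDF (a + b) 1 w * (ENNReal.ofReal |w⁻¹| * betaPDF a b (s / w)) =
      betaPDF a (b + 1) s := by
  have hβ := beta_pos ha hb
  rcases le_or_gt s 0 with hs | hs
  · rw [betaPDF_of_notMem fun h => h.1.not_ge hs, lintegral_eq_zero_of_ae_eq_zero]
    refine .of_forall fun w => ?_
    rcases le_or_gt w 0 with hw | hw
    · simp [betaPDF_eq_zero_of_nonpos hw]
    · simp [betaPDF_eq_zero_of_nonpos (div_nonpos_of_nonpos_of_nonneg hs hw.le)]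
  · simp only [betaPDF_mul_betaPDF_div ha hb hs]
    rw [lintegral_indicator measurableSet_Ioo]
    rcases le_or_gt 1 s with hs1 | hs1
    · rw [betaPDF_of_notMem fun h => h.2.not_ge hs1, Ioo_eq_empty hs1.not_gt,
        Measure.restrict_empty, lintegral_zero_measure]
    · rw [lintegral_const_mul _ (by fun_prop), lintegral_rpow_sub_Ioo hb hs1.le,
        ← ENNReal.ofReal_mul (by positivity), betaPDF, betaPDFReal_of_mem ⟨hs, hs1⟩,
        beta_add_one_right ha hb, add_sub_cancel_right]
      congr 1
      field_simp

theorem hasLaw_mul_betaMeasure (ha : 0 < a) (hb : 0 < b) :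
    HasLaw (fun p : ℝ × ℝ => p.1 * p.2) (betaMeasure a (b + 1))
      ((betaMeasure (a + b) 1).prod (betaMeasure a b)) where
  map_eq := by
    have := isProbabilityMeasureBeta ha hb
    refine Measure.ext_of_lintegral _ fun f hf => ?_
    have hscale (w : ℝ) : betaPDF (a + b) 1 w * ∫⁻ v, betaPDF a b v * f (w * v) =
        ∫⁻ s, betaPDF (a + b) 1 w * (ENNReal.ofReal |w⁻¹| * betaPDF a b (s / w)) * f s := by
      rcases le_or_gt w 0 with hw | hw
      · simp [betaPDF_eq_zero_of_nonpos hw]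
      · have h := lintegral_comp_smul volume (fun s => betaPDF a b (s / w) * f s) hw.ne'
        simp only [smul_eq_mul, mul_div_cancel_left₀ _ hw.ne', finrank_self, pow_one] at h
        rw [h, ← lintegral_const_mul _ (by fun_prop), ← lintegral_const_mul _ (by fun_prop)]
        simp only [mul_assoc]
    calc ∫⁻ x, f x ∂((betaMeasure (a + b) 1).prod (betaMeasure a b)).map (fun p => p.1 * p.2)
        = ∫⁻ w, betaPDF (a + b) 1 w * ∫⁻ v, betaPDF a b v * f (w * v) := by
          rw [lintegral_map hf (by fun_prop), lintegral_prod _ (by fun_prop)]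
          simp only [lintegral_betaMeasure]
      _ = ∫⁻ s, ∫⁻ w,
            betaPDF (a + b) 1 w * (ENNReal.ofReal |w⁻¹| * betaPDF a b (s / w)) * f s := by
          simp only [hscale]
          exact lintegral_lintegral_swap (by fun_prop)
      _ = ∫⁻ s, betaPDF a (b + 1) s * f s := by
          refine lintegral_congr fun s => ?_
          rw [lintegral_mul_const _ (by fun_prop), lintegral_betaPDF_mul_betaPDF_div ha hb]
      _ = ∫⁻ x, f x ∂betaMeasure a (b + 1) := (lintegral_betaMeasure f a (b + 1)).symm

end Product

section Simplex

open ProbabilityTheory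
open scoped ENNReal

variable {n : ℕ}

lemma measurableSet_simplex (n : ℕ) : MeasurableSet (simplex n) := by
  have : simplex n = ⋂ i : Fin n, {g | (∀ j, i < j → g i < g j) ∧ 0 < g i ∧ g i < 1} := by
    ext g
    simp only [simplex, StrictMono, mem_iInter, mem_ofPred_eq, forall_and]
  rw [this]
  measurability

lemma snoc_smul_mem_simplex_iff {x : ℝ} (hx : 0 < x) (g : Fin n → ℝ) :
    (Fin.snoc (x • g) x : Fin (n + 1) → ℝ) ∈ simplex (n + 1) ↔ x < 1 ∧ g ∈ simplex n := by
  have hmono : StrictMono (Fin.snoc (x • g) x : Fin (n + 1) → ℝ) ↔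
      StrictMono g ∧ ∀ i, g i < 1 := by
    rw [← Fin.insertNth_last', Fin.strictMono_insertNth_iff]
    simp [StrictMono, hx, Fin.castSucc_lt_last]
  simp only [simplex, mem_ofPred_eq, hmono, Fin.forall_fin_succ', Fin.snoc_castSucc,
    Fin.snoc_last, Pi.smul_apply, smul_eq_mul, mul_pos_iff_of_pos_left hx, hx,
    forall_and, and_true]
  refine ⟨fun ⟨⟨hg, hlt⟩, hpos, _, hx1⟩ => ⟨hx1, hg, hpos, hlt⟩,
    fun ⟨hx1, hg, hpos, hlt⟩ => ⟨⟨hg, hlt⟩, hpos, fun i => ?_, hx1⟩⟩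
  exact (mul_lt_of_lt_one_right hx (hlt i)).trans hx1

@[fun_prop]
lemma measurable_snoc {α : Type*} [MeasurableSpace α] (n : ℕ) :
    Measurable fun p : α × (Fin n → α) => (Fin.snoc p.2 p.1 : Fin (n + 1) → α) := by
  refine measurable_pi_lambda _ fun i => ?_
  cases i using Fin.lastCases with
  | last => simpa only [Fin.snoc_last] using measurable_fst
  | cast i =>
    simp only [Fin.snoc_castSucc]
    fun_prop

lemma lintegral_pi_succ_eq_lintegral_snoc {α : Type*} [MeasureSpace α]
    [SigmaFinite (volume : Measure α)] {F : (Fin (n + 1) → α) → ℝ≥0∞} (hF : Measurable F) :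
    ∫⁻ g, F g = ∫⁻ x : α, ∫⁻ g : Fin n → α, F (Fin.snoc g x) := by
  rw [← (volume_preserving_piFinSuccAbove (fun _ : Fin (n + 1) => α)
    (Fin.last n)).symm.lintegral_comp hF, Measure.volume_eq_prod,
    lintegral_prod _ (by fun_prop)]
  simp only [MeasurableEquiv.piFinSuccAbove_symm_apply, Fin.insertNthEquiv, Equiv.coe_fn_mk,
    Fin.insertNth_last']

/-- The joint law of the order statistics of `n` independent uniform variables on `(0, 1)`,
that is, the uniform probability measure on the simplex `Δ_n`. -/
noncomputable def orderStatLaw (n : ℕ) : Measure (Fin n → ℝ) :=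
  (n.factorial : ℝ≥0∞) • volume.restrict (simplex n)

instance : SFinite (orderStatLaw n) := by
  unfold orderStatLaw; infer_instance

lemma integrable_orderStatLaw_iff {E : Type*} [NormedAddCommGroup E] {f : (Fin n → ℝ) → E} :
    Integrable f (orderStatLaw n) ↔ IntegrableOn f (simplex n) :=
  integrable_smul_measure (by positivity) (ENNReal.natCast_ne_top _)

lemma integral_orderStatLaw {E : Type*} [NormedAddCommGroup E] [NormedSpace ℝ E]
    (f : (Fin n → ℝ) → E) :
    ∫ g, f g ∂orderStatLaw n = (n.factorial : ℝ) • ∫ g in simplex n, f g := by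
  rw [orderStatLaw, integral_smul_measure, ENNReal.toReal_natCast]

lemma ae_orderStatLaw_mem_simplex (n : ℕ) : ∀ᵐ g ∂orderStatLaw n, g ∈ simplex n :=
  Measure.ae_smul_measure (ae_restrict_mem (measurableSet_simplex n)) _

lemma lintegral_orderStatLaw (f : (Fin n → ℝ) → ℝ≥0∞) :
    ∫⁻ g, f g ∂orderStatLaw n = n.factorial * ∫⁻ g, (simplex n).indicator f g := by
  rw [orderStatLaw, lintegral_smul_measure, lintegral_indicator (measurableSet_simplex n),
    smul_eq_mul]

lemma betaPDF_mul_lintegral_orderStatLaw (f : (Fin (n + 1) → ℝ) → ℝ≥0∞) (x : ℝ) :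
    betaPDF (n + 1) 1 x * ∫⁻ g, f (Fin.snoc (x • g) x) ∂orderStatLaw n =
      (n + 1).factorial * ∫⁻ g, (simplex (n + 1)).indicator f (Fin.snoc g x) := by
  by_cases hx : x ∈ Ioo (0 : ℝ) 1
  · have hind (g : Fin n → ℝ) : (simplex (n + 1)).indicator f (Fin.snoc (x • g) x) =
        (simplex n).indicator (fun g => f (Fin.snoc (x • g) x)) g := by
      classical
      simp only [indicator_apply, snoc_smul_mem_simplex_iff hx.1, hx.2, true_and]
    have hscale := lintegral_comp_smul volume
      (fun g : Fin n → ℝ => (simplex (n + 1)).indicator f (Fin.snoc g x)) hx.1.ne'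
    have hpow : 0 < x ^ n := pow_pos hx.1 n
    rw [Module.finrank_fin_fun, abs_of_pos (inv_pos.2 hpow),
      ENNReal.ofReal_inv_of_pos hpow] at hscale
    have hpdf : betaPDF (n + 1) 1 x = (n + 1 : ℕ) * ENNReal.ofReal (x ^ n) := by
      rw [betaPDF, betaPDFReal_one_right (by positivity) hx, add_sub_cancel_right,
        Real.rpow_natCast, ENNReal.ofReal_mul (by positivity), ← Nat.cast_add_one,
        ENNReal.ofReal_natCast]
    have hcancel : ENNReal.ofReal (x ^ n) * (ENNReal.ofReal (x ^ n))⁻¹ = 1 :=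
      ENNReal.mul_inv_cancel (ENNReal.ofReal_pos.2 hpow).ne' ENNReal.ofReal_ne_top
    rw [hpdf, lintegral_orderStatLaw, ← lintegral_congr hind, hscale, Nat.factorial_succ,
      Nat.cast_mul, mul_mul_mul_comm, ← mul_assoc (ENNReal.ofReal _), hcancel, one_mul]
  · have hnot (g : Fin n → ℝ) : (Fin.snoc g x : Fin (n + 1) → ℝ) ∉ simplex (n + 1) := fun hg =>
      hx (by simpa only [Fin.snoc_last, mem_Ioo] using hg.2 (Fin.last n))
    simp [betaPDF_of_notMem hx, hnot]

theorem hasLaw_snoc_smul_orderStatLaw (n : ℕ) :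
    HasLaw (fun p : ℝ × (Fin n → ℝ) => (Fin.snoc (p.1 • p.2) p.1 : Fin (n + 1) → ℝ))
      (orderStatLaw (n + 1)) ((betaMeasure (n + 1) 1).prod (orderStatLaw n)) := by
  have hmeas : Measurable fun p : ℝ × (Fin n → ℝ) =>
      (Fin.snoc (p.1 • p.2) p.1 : Fin (n + 1) → ℝ) :=
    (measurable_snoc n).comp (measurable_fst.prodMk (measurable_fst.smul measurable_snd))
  refine ⟨hmeas.aemeasurable, Measure.ext_of_lintegral _ fun f hf => ?_⟩
  rw [lintegral_map hf hmeas, lintegral_prod _ (by fun_prop), lintegral_betaMeasure,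
    lintegral_orderStatLaw, lintegral_pi_succ_eq_lintegral_snoc
      (hf.indicator (measurableSet_simplex (n + 1))),
    ← lintegral_const_mul' _ _ (ENNReal.natCast_ne_top _)]
  exact lintegral_congr fun x => betaPDF_mul_lintegral_orderStatLaw f x

instance isProbabilityMeasure_orderStatLaw (n : ℕ) : IsProbabilityMeasure (orderStatLaw n) := by
  induction n with
  | zero =>
    have : simplex 0 = univ := by ext g; simp [simplex, StrictMono]
    simp only [orderStatLaw, this, Measure.restrict_univ, Nat.factorial_zero, Nat.cast_one,
      one_smul]
    rw [volume_pi, Measure.pi_of_empty]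
    infer_instance
  | succ n ih =>
    have := isProbabilityMeasureBeta (α := n + 1) (by positivity) one_pos
    exact (hasLaw_snoc_smul_orderStatLaw n).isProbabilityMeasure_iff.1 inferInstance

lemma hasLaw_orderStatLaw_succ {β : Type*} [MeasurableSpace β] {f : (Fin (n + 1) → ℝ) → β}
    (hf : Measurable f) {ν : Measure β}
    (h : HasLaw (fun p : ℝ × (Fin n → ℝ) => f (Fin.snoc (p.1 • p.2) p.1)) ν
      ((betaMeasure (n + 1) 1).prod (orderStatLaw n))) :
    HasLaw f ν (orderStatLaw (n + 1)) :=
  (hasLaw_snoc_smul_orderStatLaw n).comp_of_hasLaw_comp hf.aemeasurable .id h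

theorem hasLaw_apply_orderStatLaw (j : Fin n) :
    HasLaw (fun g => g j) (betaMeasure (j + 1) (n - j)) (orderStatLaw n) := by
  induction n with
  | zero => exact j.elim0
  | succ n ih =>
    have := isProbabilityMeasureBeta (α := n + 1) (by positivity) one_pos
    refine hasLaw_orderStatLaw_succ (measurable_pi_apply j) ?_
    cases j using Fin.lastCases with
    | last => simpa using measurePreserving_fst.hasLaw
    | cast j =>
      have hj : (0 : ℝ) < n - j := sub_pos.2 (Nat.cast_lt.2 j.2)
      have hmul := hasLaw_mul_betaMeasure (a := j + 1) (by positivity) hj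
      have hpair : HasLaw (Prod.map id fun g : Fin n → ℝ => g j)
        ((betaMeasure (n + 1) 1).prod (betaMeasure (j + 1) (n - j)))
        ((betaMeasure (n + 1) 1).prod (orderStatLaw n)) :=
        ((MeasurePreserving.id _).prod ((ih j).measurePreserving (by fun_prop))).hasLaw
      rw [show (j + 1 + (n - j) : ℝ) = n + 1 by ring] at hmul
      convert! hmul.comp hpair using 1
      · ext p
        simp
      · congr 1
        rw [Fin.val_castSucc]
        push_cast
        ring

theorem hasLaw_div_orderStatLaw {j k : Fin n} (hjk : j < k) :
    HasLaw (fun g => g j / g k) (betaMeasure (j + 1) (k - j)) (orderStatLaw n) := by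
  induction n with
  | zero => exact j.elim0
  | succ n ih =>
    have := isProbabilityMeasureBeta (α := n + 1) (by positivity) one_pos
    have hne : ∀ᵐ p ∂(betaMeasure (n + 1) 1).prod (orderStatLaw n), p.1 ≠ 0 :=
      Measure.quasiMeasurePreserving_fst.ae
        ((ae_betaMeasure_mem_Ioo _ _).mono fun _ hx => hx.1.ne')
    refine hasLaw_orderStatLaw_succ (by fun_prop) ?_
    cases j using Fin.lastCases with
    | last => exact absurd hjk (Fin.le_last k).not_gt
    | cast j =>
    cases k using Fin.lastCases with
    | last =>
      refine ((hasLaw_apply_orderStatLaw j).comp measurePreserving_snd.hasLaw).congr ?_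
      filter_upwards [hne] with p hp
      simp [hp]
    | cast k =>
      refine ((ih (Fin.castSucc_lt_castSucc_iff.1 hjk)).comp measurePreserving_snd.hasLaw).congr ?_
      filter_upwards [hne] with p hp
      simp [mul_div_mul_left _ _ hp]

end Simplex

section GPD

open ProbabilityTheory

variable {n : ℕ} {μ σ ξ : ℝ}

lemma measurable_gpdQ (μ σ ξ : ℝ) : Measurable (gpdQ μ σ ξ) := by
  unfold gpdQ
  split_ifs <;> fun_prop

lemma hasDerivAt_gpdQ (μ σ ξ : ℝ) {t : ℝ} (ht : 0 < t) :
    HasDerivAt (gpdQ μ σ ξ) (-(σ * t ^ (-ξ - 1))) t := by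
  rcases eq_or_ne ξ 0 with rfl | hξ
  · have hQ : gpdQ μ σ 0 = fun t => μ - σ * Real.log t := by ext; simp [gpdQ]
    rw [hQ]
    refine (((Real.hasDerivAt_log ht.ne').const_mul σ).const_sub μ).congr_deriv ?_
    rw [neg_zero, zero_sub, Real.rpow_neg_one]
  · have hQ : gpdQ μ σ ξ = fun t => μ + σ / ξ * (t ^ (-ξ) - 1) := by ext; simp [gpdQ, hξ]
    rw [hQ]
    refine ((((Real.hasDerivAt_rpow_const (p := -ξ)
      (Or.inl ht.ne')).sub_const 1).const_mul (σ / ξ)).const_add μ).congr_deriv ?_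
    field_simp

lemma exists_gpdQ_sub_gpdQ_one_eq (μ σ ξ : ℝ) {v : ℝ} (hv : v ∈ Ioo (0 : ℝ) 1) :
    ∃ τ ∈ Ioo v 1, gpdQ μ σ ξ v - gpdQ μ σ ξ 1 = σ * τ ^ (-ξ - 1) * (1 - v) := by
  obtain ⟨τ, hτ, h⟩ := exists_hasDerivAt_eq_slope (gpdQ μ σ ξ) _ hv.2
    (fun x hx => (hasDerivAt_gpdQ μ σ ξ (hv.1.trans_le hx.1)).continuousAt.continuousWithinAt)
    (fun x hx => hasDerivAt_gpdQ μ σ ξ (hv.1.trans hx.1))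
  rw [eq_div_iff (sub_pos.2 hv.2).ne'] at h
  exact ⟨τ, hτ, by linarith⟩

lemma gpdQ_one_lt (μ ξ : ℝ) (hσ : 0 < σ) {v : ℝ} (hv : v ∈ Ioo (0 : ℝ) 1) :
    gpdQ μ σ ξ 1 < gpdQ μ σ ξ v := by
  obtain ⟨τ, hτ, h⟩ := exists_gpdQ_sub_gpdQ_one_eq μ σ ξ hv
  have hτ0 : 0 < τ := hv.1.trans hτ.1
  have hv1 : 0 < 1 - v := sub_pos.2 hv.2
  rw [← sub_pos, h]
  positivity

lemma gpdQ_sub_gpdQ (μ σ ξ : ℝ) {s t : ℝ} (hs : 0 < s) (ht : 0 < t) :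
    gpdQ μ σ ξ s - gpdQ μ σ ξ t = t ^ (-ξ) * (gpdQ μ σ ξ (s / t) - gpdQ μ σ ξ 1) := by
  rcases eq_or_ne ξ 0 with rfl | hξ
  · simp only [gpdQ, if_true, Real.log_div hs.ne' ht.ne', Real.log_one, neg_zero, Real.rpow_zero]
    ring
  · have := Real.rpow_pos_of_pos ht (-ξ)
    simp only [gpdQ, hξ, if_false, Real.div_rpow hs.le ht.le, Real.one_rpow]
    field_simp
    ring

/-- The log-spacing `log (u_ξ(v) - u_ξ(1))`: every `log (u_ξ(s) - u_ξ(t))` is the log-spacing at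
`s / t` up to the scaling term `-ξ log t`. -/
noncomputable def logGap (μ σ ξ v : ℝ) : ℝ :=
  Real.log (gpdQ μ σ ξ v - gpdQ μ σ ξ 1)

lemma measurable_logGap (μ σ ξ : ℝ) : Measurable (logGap μ σ ξ) :=
  ((measurable_gpdQ μ σ ξ).sub_const _).log

lemma log_gpdQ_sub_gpdQ (μ ξ : ℝ) (hσ : 0 < σ) {s t : ℝ} (hs : 0 < s) (hst : s < t) :
    Real.log (gpdQ μ σ ξ s - gpdQ μ σ ξ t) = logGap μ σ ξ (s / t) - ξ * Real.log t := by
  have ht : 0 < t := hs.trans hst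
  have hgap := gpdQ_one_lt μ ξ hσ ⟨div_pos hs ht, (div_lt_one ht).2 hst⟩
  rw [gpdQ_sub_gpdQ μ σ ξ hs ht, Real.log_mul (Real.rpow_pos_of_pos ht _).ne'
    (sub_pos.2 hgap).ne', Real.log_rpow ht, logGap]
  ring

lemma abs_logGap_le (μ ξ : ℝ) (hσ : 0 < σ) {v : ℝ} (hv : v ∈ Ioo (0 : ℝ) 1) :
    |logGap μ σ ξ v| ≤ |Real.log σ| + |Real.log (1 - v)| + |-ξ - 1| * |Real.log v| := by
  obtain ⟨τ, hτ, h⟩ := exists_gpdQ_sub_gpdQ_one_eq μ σ ξ hv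
  have hτ0 : 0 < τ := hv.1.trans hτ.1
  have hgap : logGap μ σ ξ v = Real.log σ + Real.log (1 - v) + (-ξ - 1) * Real.log τ := by
    rw [logGap, h, Real.log_mul (by positivity) (sub_pos.2 hv.2).ne',
      Real.log_mul hσ.ne' (by positivity), Real.log_rpow hτ0]
    ring
  have hlog : |Real.log τ| ≤ |Real.log v| :=
    abs_le_abs_of_nonpos (Real.log_nonpos hτ0.le hτ.2.le) (Real.log_le_log hv.1 hτ.1.le)
  rw [hgap]
  grw [abs_add_le, abs_add_le, abs_mul, hlog]

lemma integrable_logGap_betaMeasure (μ ξ : ℝ) (hσ : 0 < σ) {a b : ℝ} (ha : 0 < a) (hb : 0 < b) :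
    Integrable (logGap μ σ ξ) (betaMeasure a b) := by
  have := isProbabilityMeasureBeta ha hb
  refine (((integrable_const |Real.log σ|).add (integrable_log_one_sub_betaMeasure ha hb).abs).add
    ((integrable_log_betaMeasure ha hb).abs.const_mul |-ξ - 1|)).mono'
    (measurable_logGap μ σ ξ).aestronglyMeasurable ?_
  filter_upwards [ae_betaMeasure_mem_Ioo a b] with v hv
  exact abs_logGap_le μ ξ hσ hv

lemma sample_eq_apply_sample_id (u : ℝ → ℝ) (g : Fin n → ℝ) {i : ℕ} (hi : i - 1 < n) :
    sample n u g i = u (sample n id g i) := by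
  simp only [sample, dif_pos hi, id]

lemma sample_id_pos {g : Fin n → ℝ} (hg : g ∈ simplex n) {i : ℕ} (hi : i - 1 < n) :
    0 < sample n id g i := by
  simpa only [sample, dif_pos hi, id] using (hg.2 ⟨i - 1, hi⟩).1

lemma strictMonoOn_sample_id {g : Fin n → ℝ} (hg : g ∈ simplex n) :
    StrictMonoOn (sample n id g) (Icc 1 n) := by
  rintro i ⟨hi, hin⟩ j ⟨hj, hjn⟩ hij
  simp only [sample, dif_pos (by omega : i - 1 < n), dif_pos (by omega : j - 1 < n), id]
  exact hg.1 (Fin.mk_lt_mk.2 (by omega))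

lemma hasLaw_sample_id_div {i d : ℕ} (hi : 1 ≤ i) (hd : 1 ≤ d) (h : i + d ≤ n) :
    HasLaw (fun g => sample n id g i / sample n id g (i + d)) (betaMeasure i d)
      (orderStatLaw n) := by
  obtain ⟨j, rfl⟩ := Nat.exists_eq_add_of_le' hi
  have hlt : (⟨j, by omega⟩ : Fin n) < ⟨j + d, by omega⟩ := Fin.mk_lt_mk.2 (by omega)
  convert! hasLaw_div_orderStatLaw hlt using 2
  · rw [sample, sample, dif_pos (by omega), dif_pos (by omega)]
    simp only [id, Nat.add_sub_cancel, Nat.add_right_comm j 1 d]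
  · push_cast
    rfl
  · simp

lemma integrable_comp_sample_id_div {i d : ℕ} (hi : 1 ≤ i) (hd : 1 ≤ d) (h : i + d ≤ n)
    {E : Type*} [NormedAddCommGroup E] {φ : ℝ → E} (hφ : Integrable φ (betaMeasure i d)) :
    Integrable (fun g => φ (sample n id g i / sample n id g (i + d))) (orderStatLaw n) :=
  have hlaw := hasLaw_sample_id_div hi hd h
  (hlaw.map_eq ▸ hφ).comp_aemeasurable hlaw.aemeasurable

lemma integral_comp_sample_id_div {i d : ℕ} (hi : 1 ≤ i) (hd : 1 ≤ d) (h : i + d ≤ n)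
    {E : Type*} [NormedAddCommGroup E] [NormedSpace ℝ E] {φ : ℝ → E}
    (hφ : AEStronglyMeasurable φ (betaMeasure i d)) :
    ∫ g, φ (sample n id g i / sample n id g (i + d)) ∂orderStatLaw n =
      ∫ x, φ x ∂betaMeasure i d :=
  (hasLaw_sample_id_div hi hd h).integral_comp hφ

lemma elemental_sample_gpdQ (μ ξ : ℝ) (hσ : 0 < σ) {i d : ℕ} (hi : 1 ≤ i) (hd : 1 ≤ d)
    (h : i + d + 1 ≤ n) {g : Fin n → ℝ} (hg : g ∈ simplex n) :
    elemental i (i + d + 1) (sample n (gpdQ μ σ ξ) g) =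
      (i + d) * logGap μ σ ξ (sample n id g i / sample n id g (i + d))
        - d * logGap μ σ ξ (sample n id g i / sample n id g (i + (d + 1)))
        - i * logGap μ σ ξ (sample n id g (i + 1) / sample n id g (i + 1 + d))
        - ξ * (i + d) * Real.log (sample n id g (i + d) / sample n id g (i + d + 1)) := by
  have hpos {k : ℕ} (hk : k ≤ n) : 0 < sample n id g k := sample_id_pos hg (by omega)
  have hlt {k l : ℕ} (hk : 1 ≤ k) (hkl : k < l) (hl : l ≤ n) :
      sample n id g k < sample n id g l :=
    strictMonoOn_sample_id hg ⟨hk, by omega⟩ ⟨by omega, hl⟩ hkl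
  have hlog {k l : ℕ} (hk : 1 ≤ k) (hkl : k < l) (hl : l ≤ n) :
      Real.log (sample n (gpdQ μ σ ξ) g k - sample n (gpdQ μ σ ξ) g l) =
        logGap μ σ ξ (sample n id g k / sample n id g l) - ξ * Real.log (sample n id g l) := by
    rw [sample_eq_apply_sample_id _ g (by omega : k - 1 < n),
      sample_eq_apply_sample_id _ g (by omega : l - 1 < n),
      log_gpdQ_sub_gpdQ μ ξ hσ (hpos (by omega)) (hlt hk hkl hl)]
  rw [elemental, Nat.add_sub_cancel, hlog hi (by omega) (by omega), hlog hi (by omega) h,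
    hlog (by omega) (by omega) h, Real.log_div (hpos (by omega)).ne' (hpos h).ne',
    show i + (d + 1) = i + d + 1 by ring, show i + 1 + d = i + d + 1 by ring]
  push_cast
  ring

lemma integrable_logGap_sample_id_div (μ ξ : ℝ) (hσ : 0 < σ) {i d : ℕ} (hi : 1 ≤ i) (hd : 1 ≤ d)
    (h : i + d ≤ n) :
    Integrable (fun g => logGap μ σ ξ (sample n id g i / sample n id g (i + d)))
      (orderStatLaw n) :=
  integrable_comp_sample_id_div hi hd h
    (integrable_logGap_betaMeasure μ ξ hσ (Nat.cast_pos.2 hi) (Nat.cast_pos.2 hd))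

lemma integrable_log_sample_id_div {i d : ℕ} (hi : 1 ≤ i) (hd : 1 ≤ d) (h : i + d ≤ n) :
    Integrable (fun g => Real.log (sample n id g i / sample n id g (i + d))) (orderStatLaw n) :=
  integrable_comp_sample_id_div hi hd h
    (integrable_log_betaMeasure (Nat.cast_pos.2 hi) (Nat.cast_pos.2 hd))

lemma integrable_elemental_and_integral_eq_integral_betaMeasure (μ ξ : ℝ) (hσ : 0 < σ) {i d : ℕ}
    (hi : 1 ≤ i) (hd : 1 ≤ d) (h : i + d + 1 ≤ n) :
    Integrable (fun g => elemental i (i + d + 1) (sample n (gpdQ μ σ ξ) g)) (orderStatLaw n) ∧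
      ∫ g, elemental i (i + d + 1) (sample n (gpdQ μ σ ξ) g) ∂orderStatLaw n =
        (i + d) * ∫ x, logGap μ σ ξ x ∂betaMeasure i d
          - d * ∫ x, logGap μ σ ξ x ∂betaMeasure i (d + 1)
          - i * ∫ x, logGap μ σ ξ x ∂betaMeasure (i + 1) d
          - ξ * (i + d) * ∫ x, Real.log x ∂betaMeasure (i + d) 1 := by
  have heq : (fun g => elemental i (i + d + 1) (sample n (gpdQ μ σ ξ) g)) =ᵐ[orderStatLaw n] _ :=
    (ae_orderStatLaw_mem_simplex n).mono fun g hg => elemental_sample_gpdQ μ ξ hσ hi hd h hg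
  have hint₁ := (integrable_logGap_sample_id_div μ ξ hσ hi hd
    (by omega : i + d ≤ n)).const_mul (i + d : ℝ)
  have hint₂ := (integrable_logGap_sample_id_div μ ξ hσ hi (by omega)
    (by omega : i + (d + 1) ≤ n)).const_mul (d : ℝ)
  have hint₃ := (integrable_logGap_sample_id_div μ ξ hσ (by omega) hd
    (by omega : i + 1 + d ≤ n)).const_mul (i : ℝ)
  have hlog := (integrable_log_sample_id_div (by omega) le_rfl h).const_mul (ξ * (i + d))
  have hint₁₂ := hint₁.sub' hint₂
  have hint₁₂₃ := hint₁₂.sub' hint₃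
  refine ⟨(hint₁₂₃.sub' hlog).congr heq.symm, ?_⟩
  rw [integral_congr_ae heq, integral_sub hint₁₂₃ hlog, integral_sub hint₁₂ hint₃,
    integral_sub hint₁ hint₂]
  simp only [integral_const_mul]
  rw [integral_comp_sample_id_div hi hd (by omega)
      (measurable_logGap μ σ ξ).aestronglyMeasurable,
    integral_comp_sample_id_div hi (by omega) (by omega)
      (measurable_logGap μ σ ξ).aestronglyMeasurable,
    integral_comp_sample_id_div (by omega) hd (by omega)
      (measurable_logGap μ σ ξ).aestronglyMeasurable,
    integral_comp_sample_id_div (by omega) le_rfl h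
      Real.measurable_log.aestronglyMeasurable]
  push_cast
  rfl

lemma integrable_elemental (μ ξ : ℝ) (hσ : 0 < σ) {I J : ℕ} (hI : 1 ≤ I) (hIJ : I + 2 ≤ J)
    (hJ : J ≤ n) :
    Integrable (fun g => elemental I J (sample n (gpdQ μ σ ξ) g)) (orderStatLaw n) := by
  obtain ⟨d, hd, rfl⟩ : ∃ d, 1 ≤ d ∧ J = I + d + 1 := ⟨J - I - 1, by omega, by omega⟩
  exact (integrable_elemental_and_integral_eq_integral_betaMeasure μ ξ hσ hI hd hJ).1

theorem integral_elemental (μ ξ : ℝ) (hσ : 0 < σ) {I J : ℕ} (hI : 1 ≤ I) (hIJ : I + 2 ≤ J)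
    (hJ : J ≤ n) :
    ∫ g, elemental I J (sample n (gpdQ μ σ ξ) g) ∂orderStatLaw n = ξ := by
  obtain ⟨d, hd, rfl⟩ : ∃ d, 1 ≤ d ∧ J = I + d + 1 := ⟨J - I - 1, by omega, by omega⟩
  have hI0 : (0 : ℝ) < I := by exact_mod_cast hI
  have hd0 : (0 : ℝ) < d := by exact_mod_cast hd
  have hbeta := add_mul_integral_betaMeasure hI0 hd0
    (integrable_logGap_betaMeasure μ ξ hσ hI0 (by positivity))
    (integrable_logGap_betaMeasure μ ξ hσ (by positivity) hd0)
  rw [(integrable_elemental_and_integral_eq_integral_betaMeasure μ ξ hσ hI hd hJ).2, hbeta,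
    integral_log_betaMeasure_one_right (by positivity)]
  field_simp
  ring

end GPD

/-- Every unit-sum linear combination of elemental estimators is an unbiased estimator
of the GPD tail parameter, for every `ξ ∈ ℝ` (possibly `0`). -/
theorem combination_unbiased (n : ℕ) (hn : 3 ≤ n) (μ σ ξ : ℝ) (hσ : 0 < σ)
    (r : ℕ → ℕ → ℝ)
    (hr : ∑ I ∈ Finset.Icc 1 n, ∑ J ∈ Finset.Icc (I + 2) n, r I J = 1) :
    IntegrableOn
      (fun g => ∑ I ∈ Finset.Icc 1 n, ∑ J ∈ Finset.Icc (I + 2) n,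
        r I J * elemental I J (sample n (gpdQ μ σ ξ) g)) (simplex n) volume ∧
    (n.factorial : ℝ) *
      ∫ g in simplex n, ∑ I ∈ Finset.Icc 1 n, ∑ J ∈ Finset.Icc (I + 2) n,
        r I J * elemental I J (sample n (gpdQ μ σ ξ) g) = ξ := by
  rw [← integrable_orderStatLaw_iff, ← smul_eq_mul, ← integral_orderStatLaw]
  have hterm (I : ℕ) (hI : I ∈ Finset.Icc 1 n) (J : ℕ) (hJ : J ∈ Finset.Icc (I + 2) n) :
      Integrable (fun g => r I J * elemental I J (sample n (gpdQ μ σ ξ) g)) (orderStatLaw n) :=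
    (integrable_elemental μ ξ hσ (Finset.mem_Icc.1 hI).1 (Finset.mem_Icc.1 hJ).1
      (Finset.mem_Icc.1 hJ).2).const_mul (r I J)
  have hsum (I : ℕ) (hI : I ∈ Finset.Icc 1 n) := integrable_finsetSum _ (hterm I hI)
  refine ⟨integrable_finsetSum _ hsum, ?_⟩
  calc _ = ∑ I ∈ Finset.Icc 1 n, ∑ J ∈ Finset.Icc (I + 2) n, r I J * ξ := by
        rw [integral_finsetSum _ hsum]
        refine Finset.sum_congr rfl fun I hI => ?_
        rw [integral_finsetSum _ (hterm I hI)]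
        refine Finset.sum_congr rfl fun J hJ => ?_
        rw [integral_const_mul, integral_elemental μ ξ hσ (Finset.mem_Icc.1 hI).1
          (Finset.mem_Icc.1 hJ).1 (Finset.mem_Icc.1 hJ).2]
    _ = ξ := by simp only [← Finset.sum_mul, hr, one_mul]
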